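/- For every integer r ≥ 4 (equivalently, every odd degree d = 2r − 1 ≥ 7), there exists a line arrangement of 2r − 1 lines in the real projective plane which is maximal Tjurina of type (2r − 1, r). -/

import Mathlib

open Classical MvPolynomial

variable {K : Type*} [Field K] [CharZero K] {ℓ : ℕ}

/-- A (central) hyperplane arrangement: a finite set of nonzero linear forms,
pairwise non-proportional. -/
def IsArrangement (A : Finset (MvPolynomial (Fin ℓ) K)) : Prop :=
  (∀ α ∈ A, α ≠ 0 ∧ α.IsHomogeneous 1) ∧
    ∀ α ∈ A, ∀ β ∈ A, α ≠ β → ∀ c : K, α ≠ c • β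

/-- The arrangement is essential: the common zero set of its forms is `{0}`. -/
def IsEssential (A : Finset (MvPolynomial (Fin ℓ) K)) : Prop :=
  ∀ v : Fin ℓ → K, (∀ α ∈ A, eval v α = 0) → v = 0

/-- The defining polynomial `Q(A)`. -/
noncomputable def Qpoly (A : Finset (MvPolynomial (Fin ℓ) K)) : MvPolynomial (Fin ℓ) K :=
  ∏ α ∈ A, α

/-- Apply a derivation `θ = Σ θ_j ∂_j` to a polynomial. -/
noncomputable def applyDer (θ : Fin ℓ → MvPolynomial (Fin ℓ) K)
    (f : MvPolynomial (Fin ℓ) K) : MvPolynomial (Fin ℓ) K :=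
  ∑ j, θ j * pderiv j f

/-- The minimal degree of a Jacobian relation `r(A)`. -/
noncomputable def mdr (A : Finset (MvPolynomial (Fin ℓ) K)) : ℕ :=
  sInf {r | ∃ θ : Fin ℓ → MvPolynomial (Fin ℓ) K, θ ≠ 0 ∧
    (∀ j, (θ j).IsHomogeneous r) ∧ applyDer θ (Qpoly A) = 0}

/-- The number of elements `|A^H|` of the restriction of `A` to `H`:
the number of distinct subspaces `H ∩ ker α_L`, `L ∈ A \ {H}`. -/
noncomputable def restCard (A : Finset (MvPolynomial (Fin ℓ) K))
    (H : MvPolynomial (Fin ℓ) K) : ℕ :=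
  ((A.erase H).image fun L => {v : Fin ℓ → K | eval v H = 0 ∧ eval v L = 0}).card

/-- The number `n_j(A)` of intersection points of multiplicity `j` of a line
arrangement `A` in `P^2`. An intersection point is encoded (bijectively) by the set
of lines of `A` passing through it, which has at least two elements. -/
noncomputable def nPoints (A : Finset (MvPolynomial (Fin 3) K)) (j : ℕ) : ℕ :=
  Set.ncard {T : Finset (MvPolynomial (Fin 3) K) |
    ∃ v : Fin 3 → K, v ≠ 0 ∧ T = A.filter (fun α => eval v α = 0) ∧
      2 ≤ T.card ∧ T.card = j}

/-- The maximal multiplicity `m(A)` of an intersection point of `A`. -/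
noncomputable def maxMult (A : Finset (MvPolynomial (Fin 3) K)) : ℕ :=
  sSup {j | 2 ≤ j ∧ nPoints A j ≠ 0}

/-- The global Tjurina number `τ(A) = Σ_{j ≥ 2} n_j(A)·(j−1)²` of a line arrangement. -/
noncomputable def tjurina (A : Finset (MvPolynomial (Fin 3) K)) : ℕ :=
  ∑ j ∈ Finset.range (A.card + 1), nPoints A j * (j - 1) ^ 2

/-- `τ(d,r)_max = (d−1)(d−r−1) + r² − C(2r−d+2, 2)`, for `d/2 ≤ r ≤ d−1`. -/
def tauMax (d r : ℕ) : ℕ :=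
  (d - 1) * (d - r - 1) + r ^ 2 - Nat.choose (2 * r - d + 2) 2

/-- A line arrangement `A` is maximal Tjurina of type `(d, r)` if it consists of `d`
lines, `r(A) = r` and `τ(A) = τ(d,r)_max`. -/
def IsMaxTjurina (A : Finset (MvPolynomial (Fin 3) K)) (d r : ℕ) : Prop :=
  A.card = d ∧ mdr A = r ∧ tjurina A = tauMax d r

/-!
For `n = r - 2 ≥ 1` take the `2 * n + 3` lines `x = 2 ^ i * z` and `y = 2 ^ i * z`, `1 ≤ i ≤ n`,
together with `z = 0`, `x = 2 * y` and `y = 2 * x`. Since the grid is geometrically spaced, each of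
the two diagonals passes through `n - 1` of its points `(2 ^ a : 2 ^ b : 1)`, and adding up the
contributions of all intersection points gives the required global Tjurina number.

The point `(0 : 1 : 0)` has multiplicity `n + 1`, and Euler's formula turns the splitting of the
defining polynomial `Q` into the lines through that point and the `n + 2` others into a Jacobian
relation of degree `n + 2`. Conversely, let `θ` be a relation of smaller degree. It is tangent to
every line, hence radial at every intersection point. The lines through `(0 : 1 : 0)` divide
`z * θ₀ - x * θ₂`, and the cofactor, which has degree at most one, vanishes at the intersection
points off these lines; as these are not collinear, `z * θ₀ = x * θ₂`. The `n + 2` other lines then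
force `θ` to be a multiple of the Euler derivation, which annihilates `Q` only if it is zero.
-/

open scoped Finset Matrix

section LinearForms

variable {σ R : Type*} [Fintype σ] [CommSemiring R]

/-- The linear form `∑ i, a i * X i` with coefficient vector `a`. -/
noncomputable def linForm (a : σ → R) : MvPolynomial σ R :=
  ∑ i, C (a i) * X i

lemma eval_linForm (a v : σ → R) : eval v (linForm a) = a ⬝ᵥ v := by
  simp [linForm, dotProduct]

lemma smul_linForm (c : R) (a : σ → R) : c • linForm a = linForm (c • a) := by
  simp [linForm, Finset.smul_sum, smul_eq_C_mul, mul_assoc]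

lemma isHomogeneous_linForm (a : σ → R) : (linForm a).IsHomogeneous 1 :=
  IsHomogeneous.sum _ _ _ fun i _ => isHomogeneous_C_mul_X (a i) i

lemma linForm_injective :
    Function.Injective (linForm : (σ → R) → MvPolynomial σ R) := by
  intro a b h
  funext i
  simpa only [eval_linForm, dotProduct_single_one] using congrArg (eval (Pi.single i 1)) h

lemma linForm_eq_zero_iff {a : σ → R} : linForm a = 0 ↔ a = 0 := by
  refine ⟨fun h => linForm_injective (h.trans ?_), fun h => ?_⟩ <;> simp [linForm, *]

lemma pderiv_linForm (a : σ → R) (j : σ) : pderiv j (linForm a) = C (a j) := by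
  simp [linForm, Derivation.leibniz, pderiv_X, Pi.single_apply]

lemma exists_eq_linForm {p : MvPolynomial σ R} (hp : p.IsHomogeneous 1) :
    ∃ a, p = linForm a := by
  rw [← mem_homogeneousSubmodule, homogeneousSubmodule_one_eq_span_X,
    Submodule.mem_span_range_iff_exists_fun] at hp
  obtain ⟨a, ha⟩ := hp
  exact ⟨a, by simp [← ha, linForm, smul_eq_C_mul]⟩

lemma exists_eq_C_add_linForm {p : MvPolynomial σ R} (hp : p.totalDegree ≤ 1) :
    ∃ e a, p = C e + linForm a := by
  obtain ⟨a, ha⟩ := exists_eq_linForm (homogeneousComponent_isHomogeneous 1 p)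
  refine ⟨coeff 0 p, a, ?_⟩
  conv_lhs => rw [← sum_homogeneousComponent p]
  rw [Finset.sum_subset (Finset.range_subset_range.2 (Nat.succ_le_succ hp)) fun i _ hi =>
      homogeneousComponent_eq_zero i p (by simpa using hi),
    Finset.sum_range_succ, Finset.sum_range_one, homogeneousComponent_zero, ha]

end LinearForms

/-- Comparing the values at `v` and `2 • v` separates the linear part from the constant term. -/
lemma eq_zero_of_forall_eval_eq_zero_of_totalDegree_le_one {σ R : Type*} [Fintype σ]
    [Nonempty σ] [CommRing R] [Nontrivial R] {p : MvPolynomial σ R} (hp : p.totalDegree ≤ 1)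
    {S : Set (σ → R)} (hS : ∀ v ∈ S, (2 : R) • v ∈ S)
    (hspan : ∀ a : σ → R, (∀ v ∈ S, a ⬝ᵥ v = 0) → a = 0) (h : ∀ v ∈ S, eval v p = 0) : p = 0 := by
  obtain ⟨e, a, rfl⟩ := exists_eq_C_add_linForm hp
  simp only [map_add, eval_C, eval_linForm] at h
  have ha : a = 0 := hspan a fun v hv => by
    have h2v := h _ (hS v hv)
    rw [dotProduct_smul, smul_eq_mul] at h2v
    linear_combination h2v - h v hv
  obtain ⟨v, hv⟩ : S.Nonempty := by
    rw [Set.nonempty_iff_ne_empty]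
    rintro rfl
    exact one_ne_zero (hspan 1 (by simp))
  have he : e = 0 := by simpa [ha] using h v hv
  rw [he, ha, C_0, zero_add, linForm_eq_zero_iff]

section CrossProduct

variable {F : Type*} [Field F]

lemma exists_eq_smul_of_cross_eq_zero {v w : Fin 3 → F} (hv : v ≠ 0) (h : v ⨯₃ w = 0) :
    ∃ t : F, w = t • v := by
  rw [← not_ne_iff, crossProduct_ne_zero_iff_linearIndependent, LinearIndependent.pair_iff' hv] at h
  push Not at h
  exact h.imp fun t ht => ht.symm

/-- Both vectors are multiples of the normal vector `a ⨯₃ b`. -/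
lemma cross_eq_zero_of_common_perp {a b v w : Fin 3 → F} (hab : a ⨯₃ b ≠ 0)
    (hav : a ⬝ᵥ v = 0) (hbv : b ⬝ᵥ v = 0) (haw : a ⬝ᵥ w = 0) (hbw : b ⬝ᵥ w = 0) :
    v ⨯₃ w = 0 := by
  have exists_smul_normal {u : Fin 3 → F} (hau : a ⬝ᵥ u = 0) (hbu : b ⬝ᵥ u = 0) :
      ∃ t : F, u = t • (a ⨯₃ b) :=
    exists_eq_smul_of_cross_eq_zero hab (by simp [cross_cross_eq_smul_sub_smul, hau, hbu])
  obtain ⟨s, rfl⟩ := exists_smul_normal hav hbv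
  obtain ⟨t, rfl⟩ := exists_smul_normal haw hbw
  simp [cross_self]

end CrossProduct

section Arrangements

variable {F : Type*} [Field F] {ℓ : ℕ}

lemma applyDer_linForm (θ : Fin ℓ → MvPolynomial (Fin ℓ) F) (a : Fin ℓ → F) :
    applyDer θ (linForm a) = ∑ i, C (a i) * θ i := by
  simp only [applyDer, pderiv_linForm, mul_comm]

lemma applyDer_mul (θ : Fin ℓ → MvPolynomial (Fin ℓ) F) (f g : MvPolynomial (Fin ℓ) F) :
    applyDer θ (f * g) = applyDer θ f * g + f * applyDer θ g := by
  simp only [applyDer, Derivation.leibniz, smul_eq_mul, Finset.sum_mul, Finset.mul_sum,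
    ← Finset.sum_add_distrib]
  exact Finset.sum_congr rfl fun i _ => by ring

lemma applyDer_smul_X {f : MvPolynomial (Fin ℓ) F} {d : ℕ} (hf : f.IsHomogeneous d)
    (s : MvPolynomial (Fin ℓ) F) : applyDer (s • X) f = s * (d • f) := by
  simp only [applyDer, Pi.smul_apply, smul_eq_mul, ← hf.sum_X_mul_pderiv, Finset.mul_sum, mul_assoc]

lemma prime_of_isHomogeneous_one {α : MvPolynomial (Fin ℓ) F} (hα : α ≠ 0)
    (h : α.IsHomogeneous 1) : Prime α := by
  refine (irreducible_of_totalDegree_eq_one (h.totalDegree hα) fun x hx => ?_).prime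
  obtain ⟨m, hm⟩ := MvPolynomial.ne_zero_iff.1 hα
  exact isUnit_iff_ne_zero.2 fun hx0 => hm (zero_dvd_iff.1 (hx0 ▸ hx m))

namespace IsArrangement

variable {A B : Finset (MvPolynomial (Fin ℓ) F)}

lemma prime (hA : IsArrangement A) {α : MvPolynomial (Fin ℓ) F} (hα : α ∈ A) : Prime α :=
  prime_of_isHomogeneous_one (hA.1 α hα).1 (hA.1 α hα).2

lemma not_dvd (hA : IsArrangement A) {α β : MvPolynomial (Fin ℓ) F} (hα : α ∈ A) (hβ : β ∈ A)
    (hne : α ≠ β) : ¬ α ∣ β := by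
  rintro ⟨q, rfl⟩
  have hαq := hA.1 _ hβ
  obtain ⟨hα0, hα1⟩ := hA.1 α hα
  have hdeg := totalDegree_mul_of_isDomain hα0 (right_ne_zero_of_mul hαq.1)
  rw [hαq.2.totalDegree hαq.1, hα1.totalDegree hα0] at hdeg
  have hq : q = C (coeff 0 q) := totalDegree_eq_zero_iff_eq_C.1 (by omega)
  exact hA.2 _ hβ α hα hne.symm (coeff 0 q) (by rw [smul_eq_C_mul, ← hq, mul_comm])

lemma prod_dvd (hA : IsArrangement A) (hB : B ⊆ A) {w : MvPolynomial (Fin ℓ) F}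
    (h : ∀ α ∈ B, α ∣ w) : ∏ α ∈ B, α ∣ w :=
  Finset.prod_dvd_of_isRelPrime (fun _ hα _ hβ hne =>
    (hA.prime (hB hα)).irreducible.isRelPrime_iff_not_dvd.2
      (hA.not_dvd (hB hα) (hB hβ) hne)) h

lemma isHomogeneous_prod (hA : IsArrangement A) (hB : B ⊆ A) :
    (∏ α ∈ B, α).IsHomogeneous #B := by
  simpa using IsHomogeneous.prod B id (fun _ => 1) fun α hα => (hA.1 α (hB hα)).2

lemma isHomogeneous_Qpoly (hA : IsArrangement A) : (Qpoly A).IsHomogeneous #A :=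
  hA.isHomogeneous_prod subset_rfl

lemma prod_ne_zero (hA : IsArrangement A) (hB : B ⊆ A) : ∏ α ∈ B, α ≠ 0 :=
  Finset.prod_ne_zero_iff.2 fun α hα => (hA.1 α (hB hα)).1

/-- A polynomial of degree less than `#B` has no room for all the factors in `B`. -/
lemma eq_zero_of_forall_dvd (hA : IsArrangement A) (hB : B ⊆ A) {w : MvPolynomial (Fin ℓ) F}
    (h : ∀ α ∈ B, α ∣ w) (hdeg : w.totalDegree < #B) : w = 0 := by
  obtain ⟨q, rfl⟩ := hA.prod_dvd hB h
  by_contra hne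
  rw [totalDegree_mul_of_isDomain (left_ne_zero_of_mul hne) (right_ne_zero_of_mul hne),
    (hA.isHomogeneous_prod hB).totalDegree (hA.prod_ne_zero hB)] at hdeg
  omega

lemma dvd_applyDer (hA : IsArrangement A) {θ : Fin ℓ → MvPolynomial (Fin ℓ) F}
    (hθ : applyDer θ (Qpoly A) = 0) {α : MvPolynomial (Fin ℓ) F} (hα : α ∈ A) :
    α ∣ applyDer θ α := by
  rw [Qpoly, ← Finset.mul_prod_erase A (fun β => β) hα, applyDer_mul] at hθ
  have hdvd : α ∣ applyDer θ α * ∏ β ∈ A.erase α, β :=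
    ⟨-applyDer θ (∏ β ∈ A.erase α, β), by linear_combination hθ⟩
  refine ((hA.prime hα).dvd_or_dvd hdvd).resolve_right fun hprod => ?_
  obtain ⟨β, hβ, hαβ⟩ := (hA.prime hα).exists_mem_finset_dvd hprod
  exact hA.not_dvd hα (Finset.mem_of_mem_erase hβ) (Finset.ne_of_mem_erase hβ).symm hαβ

end IsArrangement

/-- The lines of `A` through the point of projective space represented by `v`; for `v ≠ 0` their
number is the multiplicity of that point. -/
noncomputable def linesThrough (A : Finset (MvPolynomial (Fin ℓ) F)) (v : Fin ℓ → F) :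
    Finset (MvPolynomial (Fin ℓ) F) :=
  A.filter fun α => eval v α = 0

lemma mem_linesThrough {A : Finset (MvPolynomial (Fin ℓ) F)} {v : Fin ℓ → F}
    {α : MvPolynomial (Fin ℓ) F} : α ∈ linesThrough A v ↔ α ∈ A ∧ eval v α = 0 :=
  Finset.mem_filter

lemma linesThrough_subset (A : Finset (MvPolynomial (Fin ℓ) F)) (v : Fin ℓ → F) :
    linesThrough A v ⊆ A :=
  Finset.filter_subset _ _

lemma IsArrangement.exists_eq_linForm {A : Finset (MvPolynomial (Fin ℓ) F)}
    (hA : IsArrangement A) {α : MvPolynomial (Fin ℓ) F} (hα : α ∈ A) : ∃ a, α = linForm a :=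
  _root_.exists_eq_linForm (hA.1 α hα).2

lemma IsArrangement.linesThrough_smul {A : Finset (MvPolynomial (Fin ℓ) F)} (hA : IsArrangement A)
    {t : F} (ht : t ≠ 0) (v : Fin ℓ → F) : linesThrough A (t • v) = linesThrough A v := by
  refine Finset.filter_congr fun α hα => ?_
  obtain ⟨a, rfl⟩ := hA.exists_eq_linForm hα
  simp [eval_linForm, dotProduct_smul, ht]

end Arrangements

section JacobianRelations

variable {F : Type*} [Field F] {ℓ : ℕ}

lemma applyDer_sub (θ η : Fin ℓ → MvPolynomial (Fin ℓ) F) (f : MvPolynomial (Fin ℓ) F) :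
    applyDer (θ - η) f = applyDer θ f - applyDer η f := by
  simp [applyDer, sub_mul]

lemma applyDer_single (j : Fin ℓ) (g f : MvPolynomial (Fin ℓ) F) :
    applyDer (Pi.single j g) f = g * pderiv j f := by
  simp [applyDer, Pi.single_apply]

lemma pderiv_prod_linesThrough_single {A : Finset (MvPolynomial (Fin ℓ) F)}
    (hA : IsArrangement A) (j : Fin ℓ) :
    pderiv j (∏ α ∈ linesThrough A (Pi.single j 1), α) = 0 := by
  refine Finset.prod_induction _ (fun p => pderiv j p = 0) (fun p q hp hq => ?_) ?_ fun α hα => ?_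
  · simp [Derivation.leibniz, hp, hq]
  · simp
  · obtain ⟨hαA, hα0⟩ := mem_linesThrough.1 hα
    obtain ⟨a, rfl⟩ := hA.exists_eq_linForm hαA
    rw [eval_linForm, dotProduct_single_one] at hα0
    rw [pderiv_linForm, hα0, C_0]

/-- With `Q = g h`, where `g` collects the lines through the `j`-th coordinate point and so does
not involve `X j`, Euler's formula gives the relation `∂ⱼh · E - (deg Q) h ∂ⱼ`, where `E` is the
Euler derivation. -/
lemma exists_jacobianRelation {A : Finset (MvPolynomial (Fin ℓ) F)} (hA : IsArrangement A)
    {i j : Fin ℓ} (hij : i ≠ j) (hcard : (#A : F) ≠ 0)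
    (hoff : (A \ linesThrough A (Pi.single j 1)).Nonempty) :
    ∃ θ : Fin ℓ → MvPolynomial (Fin ℓ) F, θ ≠ 0 ∧
      (∀ k, (θ k).IsHomogeneous #(A \ linesThrough A (Pi.single j 1))) ∧
      applyDer θ (Qpoly A) = 0 := by
  set g := ∏ α ∈ linesThrough A (Pi.single j 1), α with hg
  set h := ∏ α ∈ A \ linesThrough A (Pi.single j 1), α
  have hQ : Qpoly A = h * g := (Finset.prod_sdiff (linesThrough_subset A _)).symm
  have hh : h.IsHomogeneous #(A \ linesThrough A (Pi.single j 1)) :=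
    hA.isHomogeneous_prod Finset.sdiff_subset
  have hh0 : h ≠ 0 := hA.prod_ne_zero Finset.sdiff_subset
  refine ⟨pderiv j h • X - Pi.single j (#A • h), fun hθ => ?_, fun k => ?_, ?_⟩
  · have hdh : pderiv j h = 0 := by
      simpa [hij, X_ne_zero] using congrFun hθ i
    have hhA : #A • h = 0 := by
      simpa [hdh] using congrFun hθ j
    rw [nsmul_eq_mul, ← map_natCast (C : F →+* MvPolynomial (Fin ℓ) F)] at hhA
    exact mul_ne_zero (C_ne_zero.2 hcard) hh0 hhA
  · have hEuler : (pderiv j h * X k).IsHomogeneous #(A \ linesThrough A (Pi.single j 1)) := by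
      have := hh.pderiv (i := j).mul (isHomogeneous_X F k)
      rwa [Nat.sub_add_cancel hoff.card_pos] at this
    obtain rfl | hk := eq_or_ne k j
    · simpa using hEuler.sub ((homogeneousSubmodule (Fin ℓ) F _).nsmul_mem hh #A)
    · simpa [hk] using hEuler
  · rw [applyDer_sub, applyDer_smul_X hA.isHomogeneous_Qpoly, applyDer_single, hQ,
      Derivation.leibniz, hg, pderiv_prod_linesThrough_single hA]
    simp only [nsmul_eq_mul, smul_eq_mul]
    ring

/-- The derivation `θ` is logarithmic along `A`: it maps each ideal `(α)`, `α ∈ A`, into itself.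
Jacobian relations are logarithmic by `IsArrangement.dvd_applyDer`. -/
def IsLogarithmic (A : Finset (MvPolynomial (Fin ℓ) F))
    (θ : Fin ℓ → MvPolynomial (Fin ℓ) F) : Prop :=
  ∀ α ∈ A, α ∣ applyDer θ α

/-- The points, given by representing vectors, that lie on at least two lines of `A` but on no
line of `A` through `p`. -/
def intersectionPointsOff (A : Finset (MvPolynomial (Fin ℓ) F)) (p : Fin ℓ → F) :
    Set (Fin ℓ → F) :=
  {v | 2 ≤ #(linesThrough A v) ∧ Disjoint (linesThrough A v) (linesThrough A p)}

variable {A : Finset (MvPolynomial (Fin 3) F)} {θ : Fin 3 → MvPolynomial (Fin 3) F}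

lemma IsArrangement.cross_ne_zero (hA : IsArrangement A) {a b : Fin 3 → F} (ha : linForm a ∈ A)
    (hb : linForm b ∈ A) (hne : linForm a ≠ linForm b) : a ⨯₃ b ≠ 0 := by
  intro hab
  have ha0 : a ≠ 0 := fun h => (hA.1 _ ha).1 (linForm_eq_zero_iff.2 h)
  obtain ⟨t, rfl⟩ := exists_eq_smul_of_cross_eq_zero ha0 hab
  exact hA.2 _ hb _ ha hne.symm t (smul_linForm t a).symm

lemma IsArrangement.cross_eq_zero_of_mem_linesThrough (hA : IsArrangement A)
    {α β : MvPolynomial (Fin 3) F} (hne : α ≠ β) {v w : Fin 3 → F} (hαv : α ∈ linesThrough A v)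
    (hβv : β ∈ linesThrough A v) (hαw : eval w α = 0) (hβw : eval w β = 0) : v ⨯₃ w = 0 := by
  rw [mem_linesThrough] at hαv hβv
  obtain ⟨a, rfl⟩ := hA.exists_eq_linForm hαv.1
  obtain ⟨b, rfl⟩ := hA.exists_eq_linForm hβv.1
  simp only [eval_linForm] at hαv hβv hαw hβw
  exact cross_eq_zero_of_common_perp (hA.cross_ne_zero hαv.1 hβv.1 hne) hαv.2 hβv.2 hαw hβw

lemma IsLogarithmic.eval_applyDer_eq_zero (hθ : IsLogarithmic A θ) {v : Fin 3 → F}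
    {α : MvPolynomial (Fin 3) F} (hα : α ∈ linesThrough A v) : eval v (applyDer θ α) = 0 := by
  obtain ⟨hαA, hαv⟩ := mem_linesThrough.1 hα
  obtain ⟨q, hq⟩ := hθ α hαA
  rw [hq, map_mul, hαv, zero_mul]

lemma IsLogarithmic.cross_eval_eq_zero (hA : IsArrangement A) (hθ : IsLogarithmic A θ)
    {v : Fin 3 → F} (hv : 2 ≤ #(linesThrough A v)) : v ⨯₃ (fun i => eval v (θ i)) = 0 := by
  have eval_θ {α} (hα : α ∈ linesThrough A v) : eval (fun i => eval v (θ i)) α = 0 := by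
    obtain ⟨a, rfl⟩ := hA.exists_eq_linForm (linesThrough_subset A v hα)
    simpa [applyDer_linForm, eval_linForm, dotProduct] using hθ.eval_applyDer_eq_zero hα
  obtain ⟨α, hα, β, hβ, hne⟩ := Finset.one_lt_card.1 hv
  exact hA.cross_eq_zero_of_mem_linesThrough hne hα hβ (eval_θ hα) (eval_θ hβ)

lemma IsLogarithmic.dvd_of_mem_linesThrough_single (hA : IsArrangement A)
    (hθ : IsLogarithmic A θ) {α : MvPolynomial (Fin 3) F}
    (hα : α ∈ linesThrough A (Pi.single 1 1)) : α ∣ X 2 * θ 0 - X 0 * θ 2 := by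
  obtain ⟨hαA, hα1⟩ := mem_linesThrough.1 hα
  obtain ⟨a, rfl⟩ := hA.exists_eq_linForm hαA
  obtain ⟨q, hq⟩ := hθ _ hαA
  rw [eval_linForm, dotProduct_single_one] at hα1
  rw [applyDer_linForm, linForm, Fin.sum_univ_three, Fin.sum_univ_three, hα1] at hq
  have ha : a 0 ≠ 0 ∨ a 2 ≠ 0 := by
    by_contra! ha
    refine (hA.1 _ hαA).1 (linForm_eq_zero_iff.2 ?_)
    ext i; fin_cases i <;> simp [ha, hα1]
  rw [linForm, Fin.sum_univ_three, hα1]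
  simp only [C_0, zero_mul, add_zero] at hq ⊢
  rcases ha with ha | ha <;> rw [← ((isUnit_iff_ne_zero.2 ha).map C).dvd_mul_left]
  · exact ⟨X 2 * q - θ 2, by linear_combination X 2 * hq⟩
  · exact ⟨θ 0 - X 0 * q, by linear_combination -X 0 * hq⟩

/-- The cofactor of the lines through `(0 : 1 : 0)` in `X 2 * θ 0 - X 0 * θ 2` is affine, and it
vanishes at all intersection points off these lines, where `θ` is radial. -/
lemma IsLogarithmic.X_mul_eq_X_mul [CharZero F] (hA : IsArrangement A) (hθ : IsLogarithmic A θ)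
    {k : ℕ} (hom : ∀ i, (θ i).IsHomogeneous k) (hk : k ≤ #(linesThrough A (Pi.single 1 1)))
    (hspan : ∀ a : Fin 3 → F,
      (∀ v ∈ intersectionPointsOff A (Pi.single 1 1), a ⬝ᵥ v = 0) → a = 0) :
    X 2 * θ 0 = X 0 * θ 2 := by
  set P := linesThrough A (Pi.single 1 1)
  have hPA : P ⊆ A := linesThrough_subset _ _
  obtain ⟨q, hq⟩ := hA.prod_dvd hPA fun α hα => hθ.dvd_of_mem_linesThrough_single hA hα
  have eval_q {v : Fin 3 → F} (hv : v ∈ intersectionPointsOff A (Pi.single 1 1)) :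
      eval v q = 0 := by
    have hradial : v 2 * eval v (θ 0) - v 0 * eval v (θ 2) = 0 := by
      simpa [cross_apply] using congrFun (hθ.cross_eval_eq_zero hA hv.1) 1
    have hg : eval v (∏ α ∈ P, α) ≠ 0 := by
      rw [map_prod]
      exact Finset.prod_ne_zero_iff.2 fun α hα hαv =>
        Finset.disjoint_right.1 hv.2 hα (mem_linesThrough.2 ⟨hPA hα, hαv⟩)
    have hgq := congrArg (eval v) hq
    simp only [map_sub, map_mul, eval_X, hradial] at hgq
    exact (mul_eq_zero.1 hgq.symm).resolve_left hg
  suffices hq0 : q = 0 by rwa [hq0, mul_zero, sub_eq_zero] at hq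
  by_contra hq0
  have hdeg : q.totalDegree ≤ 1 := by
    have hW : (X 2 * θ 0 - X 0 * θ 2).IsHomogeneous (1 + k) :=
      ((isHomogeneous_X F _).mul (hom 0)).sub ((isHomogeneous_X F _).mul (hom 2))
    have hmul := totalDegree_mul_of_isDomain (hA.prod_ne_zero hPA) hq0
    rw [← hq, (hA.isHomogeneous_prod hPA).totalDegree (hA.prod_ne_zero hPA)] at hmul
    have := hW.totalDegree_le
    omega
  refine hq0 (eq_zero_of_forall_eval_eq_zero_of_totalDegree_le_one hdeg (fun v hv => ?_) hspan
    fun v hv => eval_q hv)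
  rwa [intersectionPointsOff, Set.mem_ofPred, hA.linesThrough_smul two_ne_zero]

lemma IsLogarithmic.exists_eq_smul_X (hA : IsArrangement A) (hθ : IsLogarithmic A θ)
    {k : ℕ} (hom : ∀ i, (θ i).IsHomogeneous k)
    (hk : k < #(A \ linesThrough A (Pi.single 1 1))) (h : X 2 * θ 0 = X 0 * θ 2) :
    ∃ s : MvPolynomial (Fin 3) F, θ = s • X := by
  obtain ⟨s, hs⟩ : X 0 ∣ θ 0 :=
    (X_prime.dvd_or_dvd (Dvd.intro _ h.symm)).resolve_left (by simp [X_dvd_X])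
  have hs2 : θ 2 = X 2 * s := mul_left_cancel₀ (X_ne_zero 0) (by rw [← h, hs]; ring)
  have hdvd : ∀ α ∈ A \ linesThrough A (Pi.single 1 1), α ∣ θ 1 - X 1 * s := by
    intro α hα
    obtain ⟨hαA, hα1⟩ := Finset.mem_sdiff.1 hα
    obtain ⟨a, rfl⟩ := hA.exists_eq_linForm hαA
    obtain ⟨q, hq⟩ := hθ _ hαA
    have ha1 : a 1 ≠ 0 := by
      simpa [mem_linesThrough, hαA, eval_linForm] using hα1
    rw [← ((isUnit_iff_ne_zero.2 ha1).map C).dvd_mul_left]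
    refine ⟨q - s, ?_⟩
    rw [applyDer_linForm] at hq
    simp only [linForm, Fin.sum_univ_three, hs, hs2] at hq ⊢
    linear_combination hq
  have hdeg : (θ 1 - X 1 * s).totalDegree ≤ k := by
    have hXs : (X 1 * s).totalDegree ≤ k := by
      obtain rfl | hs0 := eq_or_ne s 0
      · simp
      · have h0 := (hom 0).totalDegree_le
        rw [hs, totalDegree_mul_of_isDomain (X_ne_zero 0) hs0, totalDegree_X] at h0
        rwa [totalDegree_mul_of_isDomain (X_ne_zero 1) hs0, totalDegree_X]
    exact (totalDegree_sub _ _).trans (max_le (hom 1).totalDegree_le hXs)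
  have hs1 := hA.eq_zero_of_forall_dvd Finset.sdiff_subset hdvd (hdeg.trans_lt hk)
  refine ⟨s, funext fun i => ?_⟩
  fin_cases i
  · simpa [mul_comm] using hs
  · simpa [mul_comm, sub_eq_zero] using hs1
  · simpa [mul_comm] using hs2

lemma eq_zero_of_applyDer_Qpoly_eq_zero [CharZero F] (hA : IsArrangement A)
    (hpencil : #A ≤ 2 * #(linesThrough A (Pi.single 1 1)) + 1)
    (hspan : ∀ a : Fin 3 → F,
      (∀ v ∈ intersectionPointsOff A (Pi.single 1 1), a ⬝ᵥ v = 0) → a = 0)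
    {k : ℕ} (hom : ∀ i, (θ i).IsHomogeneous k)
    (hk : k < #(A \ linesThrough A (Pi.single 1 1))) (hQ : applyDer θ (Qpoly A) = 0) : θ = 0 := by
  have hcard := Finset.card_sdiff_add_card_eq_card (linesThrough_subset A (Pi.single 1 1))
  have hθ : IsLogarithmic A θ := fun α hα => hA.dvd_applyDer hQ hα
  obtain ⟨s, rfl⟩ := hθ.exists_eq_smul_X hA hom hk
    (hθ.X_mul_eq_X_mul hA hom (by omega) hspan)
  rw [applyDer_smul_X hA.isHomogeneous_Qpoly, mul_eq_zero, smul_eq_zero] at hQ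
  have hs : s = 0 := hQ.resolve_right (not_or.2 ⟨by omega, hA.prod_ne_zero subset_rfl⟩)
  rw [hs, zero_smul]

theorem mdr_eq_card_sdiff_linesThrough [CharZero F] (hA : IsArrangement A)
    (hpencil : #A ≤ 2 * #(linesThrough A (Pi.single 1 1)) + 1)
    (hspan : ∀ a : Fin 3 → F,
      (∀ v ∈ intersectionPointsOff A (Pi.single 1 1), a ⬝ᵥ v = 0) → a = 0) :
    mdr A = #(A \ linesThrough A (Pi.single 1 1)) := by
  have hoff : (A \ linesThrough A (Pi.single 1 1)).Nonempty := by
    by_contra! hempty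
    refine one_ne_zero (hspan 1 fun v hv => ?_)
    have hsub := (linesThrough_subset A v).trans (Finset.sdiff_eq_empty_iff_subset.1 hempty)
    have hv0 : linesThrough A v = ∅ := disjoint_self.1 (hv.2.mono_right hsub)
    simp [intersectionPointsOff, hv0] at hv
  have hA0 : (#A : F) ≠ 0 :=
    Nat.cast_ne_zero.2 (hoff.mono Finset.sdiff_subset).card_ne_zero
  have hrel := exists_jacobianRelation hA (zero_ne_one : (0 : Fin 3) ≠ 1) hA0 hoff
  refine le_antisymm (Nat.sInf_le hrel) (le_csInf ⟨_, hrel⟩ ?_)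
  rintro k ⟨θ, hθ0, hom, hQ⟩
  by_contra! hk
  exact hθ0 (eq_zero_of_applyDer_Qpoly_eq_zero hA hpencil hspan hom hk hQ)

end JacobianRelations

section GlobalTjurinaNumber

variable {F ι : Type*} [Field F]

/-- The vectors `p i`, `i ∈ s`, represent every intersection point of `A` exactly once. -/
structure EnumeratesIntersections (A : Finset (MvPolynomial (Fin 3) F)) (s : Finset ι)
    (p : ι → Fin 3 → F) : Prop where
  ne_zero : ∀ i ∈ s, p i ≠ 0
  two_le_card : ∀ i ∈ s, 2 ≤ #(linesThrough A (p i))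
  eq_of_cross_eq_zero : ∀ i ∈ s, ∀ j ∈ s, p i ⨯₃ p j = 0 → i = j
  exists_mem_linesThrough : ∀ α ∈ A, ∀ β ∈ A, α ≠ β →
    ∃ i ∈ s, α ∈ linesThrough A (p i) ∧ β ∈ linesThrough A (p i)

namespace EnumeratesIntersections

variable {A : Finset (MvPolynomial (Fin 3) F)} {s : Finset ι} {p : ι → Fin 3 → F}

lemma injOn_linesThrough (hp : EnumeratesIntersections A s p) (hA : IsArrangement A) :
    Set.InjOn (fun i => linesThrough A (p i)) s := by
  intro i hi j hj hij
  obtain ⟨α, hα, β, hβ, hne⟩ := Finset.one_lt_card.1 (hp.two_le_card i hi)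
  have on_j {γ} (hγ : γ ∈ linesThrough A (p i)) : eval (p j) γ = 0 :=
    (mem_linesThrough.1 ((congrArg (γ ∈ ·) hij).mp hγ)).2
  exact hp.eq_of_cross_eq_zero i hi j hj
    (hA.cross_eq_zero_of_mem_linesThrough hne hα hβ (on_j hα) (on_j hβ))

lemma exists_linesThrough_eq (hp : EnumeratesIntersections A s p) (hA : IsArrangement A)
    {v : Fin 3 → F} (hv0 : v ≠ 0) (hv : 2 ≤ #(linesThrough A v)) :
    ∃ i ∈ s, linesThrough A (p i) = linesThrough A v := by
  obtain ⟨α, hα, β, hβ, hne⟩ := Finset.one_lt_card.1 hv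
  obtain ⟨hαA, hαv⟩ := mem_linesThrough.1 hα
  obtain ⟨hβA, hβv⟩ := mem_linesThrough.1 hβ
  obtain ⟨i, hi, hαi, hβi⟩ := hp.exists_mem_linesThrough α hαA β hβA hne
  obtain ⟨t, rfl⟩ := exists_eq_smul_of_cross_eq_zero (hp.ne_zero i hi)
    (hA.cross_eq_zero_of_mem_linesThrough hne hαi hβi hαv hβv)
  exact ⟨i, hi, (hA.linesThrough_smul (left_ne_zero_of_smul hv0) (p i)).symm⟩

lemma nPoints_eq (hp : EnumeratesIntersections A s p) (hA : IsArrangement A) (j : ℕ) :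
    nPoints A j = #{i ∈ s | #(linesThrough A (p i)) = j} := by
  rw [← Finset.card_image_of_injOn
    ((hp.injOn_linesThrough hA).mono (Finset.coe_subset.2 (Finset.filter_subset _ s))),
    nPoints, ← Set.ncard_coe_finset]
  congr 1
  ext T
  simp only [Set.mem_ofPred_eq, Finset.coe_image, Finset.coe_filter, Set.mem_image]
  constructor
  · rintro ⟨v, hv0, rfl, hv, rfl⟩
    obtain ⟨i, hi, hiv⟩ := hp.exists_linesThrough_eq hA hv0 hv
    exact ⟨i, ⟨hi, congrArg Finset.card hiv⟩, hiv⟩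
  · rintro ⟨i, ⟨hi, rfl⟩, rfl⟩
    exact ⟨p i, hp.ne_zero i hi, rfl, hp.two_le_card i hi, rfl⟩

theorem tjurina_eq_sum (hp : EnumeratesIntersections A s p) (hA : IsArrangement A) :
    tjurina A = ∑ i ∈ s, (#(linesThrough A (p i)) - 1) ^ 2 := by
  have hmaps : ∀ i ∈ s, #(linesThrough A (p i)) ∈ Finset.range (#A + 1) := fun i _ =>
    Finset.mem_range_succ_iff.2 (Finset.card_le_card (linesThrough_subset A (p i)))
  rw [tjurina, ← Finset.sum_fiberwise_of_maps_to' hmaps fun m => (m - 1) ^ 2]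
  exact Finset.sum_congr rfl fun j _ => by
    rw [hp.nPoints_eq hA, Finset.sum_const, smul_eq_mul]

end EnumeratesIntersections

end GlobalTjurinaNumber

section LineFamilies

variable {F ι : Type*} [Field F] [Fintype ι] {c : ι → Fin 3 → F}

/-- The arrangement of the lines with coefficient vectors `c i`. -/
noncomputable def arrangementOf (c : ι → Fin 3 → F) : Finset (MvPolynomial (Fin 3) F) :=
  Finset.univ.image (linForm ∘ c)

lemma linForm_mem_arrangementOf (c : ι → Fin 3 → F) (i : ι) : linForm (c i) ∈ arrangementOf c :=
  Finset.mem_image_of_mem _ (Finset.mem_univ i)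

lemma forall_mem_arrangementOf {q : MvPolynomial (Fin 3) F → Prop} :
    (∀ α ∈ arrangementOf c, q α) ↔ ∀ i, q (linForm (c i)) := by
  simp [arrangementOf]

lemma isArrangement_arrangementOf (hc0 : ∀ i, c i ≠ 0)
    (hc : ∀ i j, c i ⨯₃ c j = 0 → i = j) : IsArrangement (arrangementOf c) := by
  simp only [IsArrangement, forall_mem_arrangementOf]
  refine ⟨fun i => ⟨linForm_eq_zero_iff.not.2 (hc0 i), isHomogeneous_linForm _⟩,
    fun i j hne t hij => hne (congrArg (fun i => linForm (c i)) (hc i j ?_))⟩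
  rw [smul_linForm] at hij
  rw [linForm_injective hij, map_smul, LinearMap.smul_apply, cross_self, smul_zero]

lemma card_arrangementOf (hc : Function.Injective c) : #(arrangementOf c) = Fintype.card ι :=
  Finset.card_image_of_injective _ (linForm_injective.comp hc)

lemma card_linesThrough_arrangementOf (hc : Function.Injective c) (v : Fin 3 → F) :
    #(linesThrough (arrangementOf c) v) = #{i | c i ⬝ᵥ v = 0} := by
  rw [linesThrough, arrangementOf, Finset.filter_image,
    Finset.card_image_of_injective _ (linForm_injective.comp hc)]
  simp only [Function.comp_apply, eval_linForm]

end LineFamilies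

lemma two_pow_inj {F : Type*} [Field F] [CharZero F] {a b : ℕ} :
    (2 : F) ^ a = 2 ^ b ↔ a = b := by
  exact_mod_cast Nat.pow_right_inj (le_refl 2)

lemma card_filter_eq_succ (n a : ℕ) :
    #{i : Fin n | a = i + 1} = if a ∈ Finset.Icc 1 n then 1 else 0 := by
  split_ifs with ha <;> rw [Finset.mem_Icc] at ha
  · refine Finset.card_eq_one.2 ⟨⟨a - 1, by omega⟩, Finset.ext fun i => ?_⟩
    simp only [Finset.mem_filter_univ, Finset.mem_singleton, Fin.ext_iff]
    omega
  · refine Finset.card_eq_zero.2 (Finset.filter_false_of_mem fun i _ => ?_)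
    omega

section GridArrangement

/-- Coefficient vectors of the lines `x = 2 ^ i * z` and `y = 2 ^ i * z` for `1 ≤ i ≤ n`, followed
by `z = 0`, `x = 2 * y` and `y = 2 * x`. -/
def gridLine (F : Type*) [Field F] (n : ℕ) : Fin n ⊕ Fin n ⊕ Fin 3 → Fin 3 → F :=
  Sum.elim (fun i => ![1, 0, -2 ^ (i.val + 1)]) <|
    Sum.elim (fun i => ![0, 1, -2 ^ (i.val + 1)]) ![![0, 0, 1], ![1, -2, 0], ![-2, 1, 0]]

/-- The points `(2 ^ a : 2 ^ b : 1)`, indexed by `(a, b)`, followed by the five intersection points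
of the lines of `gridLine` that are not of this form. -/
def gridPoint (F : Type*) [Field F] : (ℕ × ℕ) ⊕ Fin 5 → Fin 3 → F :=
  Sum.elim (fun e => ![2 ^ e.1, 2 ^ e.2, 1])
    ![![0, 0, 1], ![1, 0, 0], ![0, 1, 0], ![2, 1, 0], ![1, 2, 0]]

/-- The exponents of the intersection points of a diagonal `x = 2 * y` or `y = 2 * x` with the
lines `x = 2 ^ i * z` and `y = 2 ^ i * z` that lie outside the grid. -/
def offGridExponents (n : ℕ) : Finset (ℕ × ℕ) :=
  {(1, 0), (0, 1), (n + 1, n), (n, n + 1)}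

/-- The indices of the points of `gridPoint` that are intersection points of `gridLine F n`. -/
def gridPointIndices (n : ℕ) : Finset ((ℕ × ℕ) ⊕ Fin 5) :=
  (Finset.Icc 1 n ×ˢ Finset.Icc 1 n ∪ offGridExponents n).disjSum Finset.univ

/-- The arrangement of the `2 * n + 3` lines of `gridLine`. -/
noncomputable def gridArrangement (F : Type*) [Field F] (n : ℕ) :
    Finset (MvPolynomial (Fin 3) F) :=
  arrangementOf (gridLine F n)

lemma inl_mem_gridPointIndices {n a b : ℕ} : Sum.inl (a, b) ∈ gridPointIndices n ↔
    ((1 ≤ a ∧ a ≤ n) ∧ 1 ≤ b ∧ b ≤ n) ∨ (a = 1 ∧ b = 0) ∨ (a = 0 ∧ b = 1) ∨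
      (a = n + 1 ∧ b = n) ∨ (a = n ∧ b = n + 1) := by
  simp only [gridPointIndices, offGridExponents, Finset.inl_mem_disjSum, Finset.mem_union,
    Finset.mem_product, Finset.mem_Icc, Finset.mem_insert, Finset.mem_singleton, Prod.mk.injEq]

lemma inr_mem_gridPointIndices (n : ℕ) (k : Fin 5) : Sum.inr k ∈ gridPointIndices n := by
  simp [gridPointIndices]

variable {F : Type*} [Field F] {n : ℕ}

lemma gridLine_inl_dotProduct_eq_zero {i : Fin n} {v : Fin 3 → F} :
    gridLine F n (.inl i) ⬝ᵥ v = 0 ↔ v 0 = 2 ^ (i.val + 1) * v 2 := by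
  rw [← sub_eq_zero (a := v 0)]
  simp [gridLine, dotProduct, Fin.sum_univ_three, sub_eq_add_neg]

lemma gridLine_inr_inl_dotProduct_eq_zero {i : Fin n} {v : Fin 3 → F} :
    gridLine F n (.inr (.inl i)) ⬝ᵥ v = 0 ↔ v 1 = 2 ^ (i.val + 1) * v 2 := by
  rw [← sub_eq_zero (a := v 1)]
  simp [gridLine, dotProduct, Fin.sum_univ_three, sub_eq_add_neg]

lemma gridLine_inr_inr_zero_dotProduct_eq_zero {v : Fin 3 → F} :
    gridLine F n (.inr (.inr 0)) ⬝ᵥ v = 0 ↔ v 2 = 0 := by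
  simp [gridLine, dotProduct, Fin.sum_univ_three]

lemma gridLine_inr_inr_one_dotProduct_eq_zero {v : Fin 3 → F} :
    gridLine F n (.inr (.inr 1)) ⬝ᵥ v = 0 ↔ v 0 = 2 * v 1 := by
  rw [← sub_eq_zero (a := v 0)]
  simp [gridLine, dotProduct, Fin.sum_univ_three, sub_eq_add_neg]

lemma gridLine_inr_inr_two_dotProduct_eq_zero {v : Fin 3 → F} :
    gridLine F n (.inr (.inr 2)) ⬝ᵥ v = 0 ↔ v 1 = 2 * v 0 := by
  rw [← sub_eq_zero (a := v 1), sub_eq_neg_add]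
  simp [gridLine, dotProduct, Fin.sum_univ_three]

lemma gridLine_ne_zero (i : Fin n ⊕ Fin n ⊕ Fin 3) : gridLine F n i ≠ 0 := by
  rcases i with i | i | i
  · simp [gridLine]
  · simp [gridLine]
  · fin_cases i <;> simp [gridLine]

lemma gridPoint_ne_zero (P : (ℕ × ℕ) ⊕ Fin 5) : gridPoint F P ≠ 0 := by
  rcases P with ⟨a, b⟩ | k
  · simp [gridPoint]
  · fin_cases k <;> simp [gridPoint]

lemma isEssential_gridArrangement (hn : n ≠ 0) : IsEssential (gridArrangement F n) := by
  intro v hv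
  simp only [gridArrangement, forall_mem_arrangementOf, eval_linForm] at hv
  have h2 : v 2 = 0 := gridLine_inr_inr_zero_dotProduct_eq_zero.1 (hv _)
  have h0 : v 0 = 0 := by
    rw [gridLine_inl_dotProduct_eq_zero.1 (hv (.inl ⟨0, hn.bot_lt⟩)), h2, mul_zero]
  have h1 : v 1 = 0 := by
    rw [gridLine_inr_inl_dotProduct_eq_zero.1 (hv (.inr (.inl ⟨0, hn.bot_lt⟩))), h2, mul_zero]
  ext i
  fin_cases i <;> assumption

lemma exists_gridPoint_of_vertical (i : Fin n) (j : Fin n ⊕ Fin n ⊕ Fin 3) :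
    ∃ P ∈ gridPointIndices n,
      gridLine F n (.inl i) ⬝ᵥ gridPoint F P = 0 ∧ gridLine F n j ⬝ᵥ gridPoint F P = 0 := by
  rcases j with j | j | j
  · exact ⟨.inr 2, inr_mem_gridPointIndices n 2, by simp [gridLine, gridPoint],
      by simp [gridLine, gridPoint]⟩
  · exact ⟨.inl (i + 1, j + 1), inl_mem_gridPointIndices.2 (by omega),
      by simp [gridLine, gridPoint], by simp [gridLine, gridPoint]⟩
  · fin_cases j
    · exact ⟨.inr 2, inr_mem_gridPointIndices n 2, by simp [gridLine, gridPoint],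
        by simp [gridLine, gridPoint]⟩
    · exact ⟨.inl (i + 1, i), inl_mem_gridPointIndices.2 (by omega),
        by simp [gridLine, gridPoint], by simp [gridLine, gridPoint, pow_succ']⟩
    · exact ⟨.inl (i + 1, i + 1 + 1), inl_mem_gridPointIndices.2 (by omega),
        by simp [gridLine, gridPoint], by simp [gridLine, gridPoint, pow_succ']⟩

lemma exists_gridPoint_of_horizontal (i : Fin n) (j : Fin n ⊕ Fin n ⊕ Fin 3) :
    ∃ P ∈ gridPointIndices n,
      gridLine F n (.inr (.inl i)) ⬝ᵥ gridPoint F P = 0 ∧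
        gridLine F n j ⬝ᵥ gridPoint F P = 0 := by
  rcases j with j | j | j
  · exact (exists_gridPoint_of_vertical j _).imp fun _ => And.imp_right And.symm
  · exact ⟨.inr 1, inr_mem_gridPointIndices n 1, by simp [gridLine, gridPoint],
      by simp [gridLine, gridPoint]⟩
  · fin_cases j
    · exact ⟨.inr 1, inr_mem_gridPointIndices n 1, by simp [gridLine, gridPoint],
        by simp [gridLine, gridPoint]⟩
    · exact ⟨.inl (i + 1 + 1, i + 1), inl_mem_gridPointIndices.2 (by omega),
        by simp [gridLine, gridPoint], by simp [gridLine, gridPoint, pow_succ']⟩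
    · exact ⟨.inl (i, i + 1), inl_mem_gridPointIndices.2 (by omega),
        by simp [gridLine, gridPoint], by simp [gridLine, gridPoint, pow_succ']⟩

lemma exists_gridPoint_of_ne {i j : Fin n ⊕ Fin n ⊕ Fin 3} (hij : i ≠ j) :
    ∃ P ∈ gridPointIndices n,
      gridLine F n i ⬝ᵥ gridPoint F P = 0 ∧ gridLine F n j ⬝ᵥ gridPoint F P = 0 := by
  rcases i with i | i | i
  · exact exists_gridPoint_of_vertical i j
  · exact exists_gridPoint_of_horizontal i j
  rcases j with j | j | j
  · exact (exists_gridPoint_of_vertical j _).imp fun _ => And.imp_right And.symm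
  · exact (exists_gridPoint_of_horizontal j _).imp fun _ => And.imp_right And.symm
  have hne : i ≠ j := fun h => hij (h ▸ rfl)
  refine ⟨.inr (![![0, 3, 4], ![3, 0, 0], ![4, 0, 0]] i j), inr_mem_gridPointIndices n _, ?_⟩
  fin_cases i <;> fin_cases j <;> simp [gridLine, gridPoint] at hne ⊢

variable [CharZero F]

lemma eq_of_cross_gridLine_eq_zero {i j : Fin n ⊕ Fin n ⊕ Fin 3}
    (h : gridLine F n i ⨯₃ gridLine F n j = 0) : i = j := by
  rw [cross_apply] at h
  have one_ne_four : (1 : F) ≠ 2 * 2 := by norm_num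
  rcases i with i | i | i <;> rcases j with j | j | j <;>
    (try fin_cases i) <;> (try fin_cases j) <;>
    simp [gridLine, neg_add_eq_zero, sub_eq_zero, two_pow_inj, Fin.ext_iff, one_ne_four,
      one_ne_four.symm] at h ⊢ <;>
    omega

lemma eq_of_cross_gridPoint_eq_zero {P Q : (ℕ × ℕ) ⊕ Fin 5}
    (h : gridPoint F P ⨯₃ gridPoint F Q = 0) : P = Q := by
  rw [cross_apply] at h
  have one_ne_four : (1 : F) ≠ 2 * 2 := by norm_num
  rcases P with ⟨a, b⟩ | k <;> rcases Q with ⟨a', b'⟩ | l <;>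
    (try fin_cases k) <;> (try fin_cases l) <;>
    simp [gridPoint, sub_eq_zero, two_pow_inj, one_ne_four, one_ne_four.symm] at h ⊢
  omega

lemma gridLine_injective : Function.Injective (gridLine F n) := fun i j h =>
  eq_of_cross_gridLine_eq_zero (by rw [h, cross_self])

lemma isArrangement_gridArrangement : IsArrangement (gridArrangement F n) :=
  isArrangement_arrangementOf gridLine_ne_zero fun _ _ => eq_of_cross_gridLine_eq_zero

lemma card_gridArrangement : #(gridArrangement F n) = 2 * n + 3 := by
  rw [gridArrangement, card_arrangementOf gridLine_injective]
  simp only [Fintype.card_sum, Fintype.card_fin]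
  ring

lemma card_linesThrough_gridArrangement (v : Fin 3 → F) :
    #(linesThrough (gridArrangement F n) v) =
      #{i : Fin n | v 0 = 2 ^ (i.val + 1) * v 2} + #{i : Fin n | v 1 = 2 ^ (i.val + 1) * v 2} +
        (if v 2 = 0 then 1 else 0) + (if v 0 = 2 * v 1 then 1 else 0) +
        (if v 1 = 2 * v 0 then 1 else 0) := by
  rw [gridArrangement, card_linesThrough_arrangementOf gridLine_injective]
  simp only [Finset.card_filter, Fintype.sum_sum_type, Fin.sum_univ_three,
    gridLine_inl_dotProduct_eq_zero, gridLine_inr_inl_dotProduct_eq_zero,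
    gridLine_inr_inr_zero_dotProduct_eq_zero, gridLine_inr_inr_one_dotProduct_eq_zero,
    gridLine_inr_inr_two_dotProduct_eq_zero]
  ring

lemma card_linesThrough_gridPoint_inl (a b : ℕ) :
    #(linesThrough (gridArrangement F n) (gridPoint F (.inl (a, b)))) =
      (if a ∈ Finset.Icc 1 n then 1 else 0) + (if b ∈ Finset.Icc 1 n then 1 else 0) +
        (if a = b + 1 then 1 else 0) + (if b = a + 1 then 1 else 0) := by
  simp [card_linesThrough_gridArrangement, gridPoint, ← pow_succ', two_pow_inj,
    card_filter_eq_succ]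

lemma card_linesThrough_gridPoint_inr (k : Fin 5) :
    #(linesThrough (gridArrangement F n) (gridPoint F (.inr k))) =
      ![2, n + 1, n + 1, 2, 2] k := by
  rw [card_linesThrough_gridArrangement]
  have hpow (i : ℕ) : (0 : F) ≠ 2 ^ i := (pow_ne_zero i two_ne_zero).symm
  fin_cases k <;> simp [gridPoint, hpow] <;> norm_num

lemma two_le_card_linesThrough_gridPoint (hn : n ≠ 0) {P : (ℕ × ℕ) ⊕ Fin 5}
    (hP : P ∈ gridPointIndices n) :
    2 ≤ #(linesThrough (gridArrangement F n) (gridPoint F P)) := by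
  rcases P with ⟨a, b⟩ | k
  · rw [inl_mem_gridPointIndices] at hP
    rw [card_linesThrough_gridPoint_inl]
    simp only [Finset.mem_Icc]
    split_ifs <;> omega
  · rw [card_linesThrough_gridPoint_inr]
    fin_cases k <;> simp <;> omega

theorem enumeratesIntersections_gridPoint (hn : n ≠ 0) :
    EnumeratesIntersections (gridArrangement F n) (gridPointIndices n) (gridPoint F) where
  ne_zero P _ := gridPoint_ne_zero P
  two_le_card _ := two_le_card_linesThrough_gridPoint hn
  eq_of_cross_eq_zero _ _ _ _ := eq_of_cross_gridPoint_eq_zero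
  exists_mem_linesThrough := by
    simp only [gridArrangement, forall_mem_arrangementOf, mem_linesThrough, eval_linForm,
      linForm_mem_arrangementOf, true_and]
    exact fun i j hne => exists_gridPoint_of_ne fun hij => hne (hij ▸ rfl)

lemma sum_Icc_ite_eq_succ (n : ℕ) :
    ∑ a ∈ Finset.Icc 1 n, ∑ b ∈ Finset.Icc 1 n, (if a = b + 1 then 1 else 0) = n - 1 := by
  have hfilter : (Finset.Icc 1 n).filter (fun b => b + 1 ∈ Finset.Icc 1 n) =
      Finset.Icc 1 (n - 1) := by
    ext b
    simp only [Finset.mem_filter, Finset.mem_Icc]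
    omega
  rw [Finset.sum_comm]
  simp only [Finset.sum_ite_eq']
  rw [← Finset.card_filter, hfilter, Nat.card_Icc, Nat.add_sub_cancel]

lemma sum_grid_sq (n : ℕ) :
    ∑ e ∈ Finset.Icc 1 n ×ˢ Finset.Icc 1 n,
      (#(linesThrough (gridArrangement F n) (gridPoint F (.inl e))) - 1) ^ 2 =
      n ^ 2 + 6 * (n - 1) := by
  have hterm : ∀ e ∈ Finset.Icc 1 n ×ˢ Finset.Icc 1 n,
      (#(linesThrough (gridArrangement F n) (gridPoint F (.inl e))) - 1) ^ 2 =
        1 + 3 * (if e.1 = e.2 + 1 then 1 else 0) + 3 * (if e.2 = e.1 + 1 then 1 else 0) := by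
    rintro ⟨a, b⟩ he
    obtain ⟨ha, hb⟩ := Finset.mem_product.1 he
    rw [card_linesThrough_gridPoint_inl, if_pos ha, if_pos hb]
    split_ifs <;> first | rfl | omega
  rw [Finset.sum_congr rfl hterm, Finset.sum_add_distrib, Finset.sum_add_distrib,
    ← Finset.mul_sum, ← Finset.mul_sum, Finset.sum_product, Finset.sum_product,
    Finset.sum_product_right, sum_Icc_ite_eq_succ]
  simp only [Finset.sum_const, Nat.card_Icc, smul_eq_mul, Nat.add_sub_cancel]
  ring

lemma card_offGridExponents (hn : n ≠ 0) : #(offGridExponents n) = 4 := by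
  have h1 : ((1, 0) : ℕ × ℕ) ∉ ({(0, 1), (n + 1, n), (n, n + 1)} : Finset (ℕ × ℕ)) := by
    simp [hn]
  have h2 : ((0, 1) : ℕ × ℕ) ∉ ({(n + 1, n), (n, n + 1)} : Finset (ℕ × ℕ)) := by
    simp [hn.symm]
  rw [offGridExponents, Finset.card_insert_of_notMem h1, Finset.card_insert_of_notMem h2,
    Finset.card_pair (by simp)]

lemma sum_offGridExponents_sq (hn : n ≠ 0) :
    ∑ e ∈ offGridExponents n,
      (#(linesThrough (gridArrangement F n) (gridPoint F (.inl e))) - 1) ^ 2 = 4 := by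
  have hterm : ∀ e ∈ offGridExponents n,
      (#(linesThrough (gridArrangement F n) (gridPoint F (.inl e))) - 1) ^ 2 = 1 := by
    intro e he
    have hn2 : n ≠ n + 1 + 1 := by omega
    simp only [offGridExponents, Finset.mem_insert, Finset.mem_singleton] at he
    rcases he with rfl | rfl | rfl | rfl <;>
      simp [card_linesThrough_gridPoint_inl, Nat.one_le_iff_ne_zero, hn, hn2]
  rw [Finset.sum_congr rfl hterm, Finset.sum_const, card_offGridExponents hn, smul_eq_mul]

theorem tjurina_gridArrangement (hn : n ≠ 0) :
    tjurina (gridArrangement F n) = 3 * n ^ 2 + 6 * n + 1 := by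
  have hdisj : Disjoint (Finset.Icc 1 n ×ˢ Finset.Icc 1 n) (offGridExponents n) := by
    simp [offGridExponents]
  rw [(enumeratesIntersections_gridPoint hn).tjurina_eq_sum isArrangement_gridArrangement,
    gridPointIndices, Finset.sum_disjSum, Finset.sum_union hdisj, sum_grid_sq,
    sum_offGridExponents_sq hn, Fin.sum_univ_five]
  simp only [card_linesThrough_gridPoint_inr, Matrix.cons_val, Nat.add_sub_cancel]
  have := Nat.sub_add_cancel (Nat.one_le_iff_ne_zero.2 hn)
  linarith

lemma disjoint_linesThrough_single {v : Fin 3 → F} (hv2 : v 2 ≠ 0)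
    (hv0 : ∀ i : Fin n, v 0 ≠ 2 ^ (i.val + 1) * v 2) :
    Disjoint (linesThrough (gridArrangement F n) v)
      (linesThrough (gridArrangement F n) (Pi.single 1 1)) := by
  suffices ∀ i, gridLine F n i ⬝ᵥ v = 0 → gridLine F n i 1 ≠ 0 by
    rw [linesThrough, linesThrough, Finset.disjoint_filter]
    simpa only [gridArrangement, forall_mem_arrangementOf, eval_linForm, dotProduct_single_one]
  rintro (i | i | i) hi
  · exact absurd (gridLine_inl_dotProduct_eq_zero.1 hi) (hv0 i)
  · simp [gridLine]
  · fin_cases i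
    · exact absurd (gridLine_inr_inr_zero_dotProduct_eq_zero.1 hi) hv2
    · simp [gridLine]
    · simp [gridLine]

lemma gridPoint_inl_mem_intersectionPointsOff (hn : n ≠ 0) {a b : ℕ} (ha : a ∉ Finset.Icc 1 n)
    (hab : .inl (a, b) ∈ gridPointIndices n) :
    gridPoint F (.inl (a, b)) ∈ intersectionPointsOff (gridArrangement F n) (Pi.single 1 1) := by
  refine ⟨two_le_card_linesThrough_gridPoint hn hab,
    disjoint_linesThrough_single (by simp [gridPoint]) fun i hi => ha ?_⟩
  have hai : a = i + 1 := by simpa [gridPoint, two_pow_inj] using hi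
  exact Finset.mem_Icc.2 (by omega)

lemma gridPoint_inr_zero_mem_intersectionPointsOff (hn : n ≠ 0) :
    gridPoint F (.inr 0) ∈ intersectionPointsOff (gridArrangement F n) (Pi.single 1 1) :=
  ⟨two_le_card_linesThrough_gridPoint hn (inr_mem_gridPointIndices n 0),
    disjoint_linesThrough_single (by simp [gridPoint]) fun i => by
      simpa [gridPoint] using (pow_ne_zero (i.val + 1) two_ne_zero).symm⟩

/-- The origin, `(1 : 2 : 1)` and `(2 ^ (n + 1) : 2 ^ n : 1)` are not collinear. -/
lemma eq_zero_of_dotProduct_intersectionPointsOff (hn : n ≠ 0) {a : Fin 3 → F}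
    (ha : ∀ v ∈ intersectionPointsOff (gridArrangement F n) (Pi.single 1 1), a ⬝ᵥ v = 0) :
    a = 0 := by
  have origin := ha _ (gridPoint_inr_zero_mem_intersectionPointsOff hn)
  have lower := ha _ (gridPoint_inl_mem_intersectionPointsOff hn (a := 0) (b := 1) (by simp)
    (inl_mem_gridPointIndices.2 (by omega)))
  have upper := ha _ (gridPoint_inl_mem_intersectionPointsOff hn (a := n + 1) (b := n) (by simp)
    (inl_mem_gridPointIndices.2 (by omega)))
  simp only [gridPoint, dotProduct, Fin.sum_univ_three, Sum.elim_inl, Sum.elim_inr,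
    Matrix.cons_val] at origin lower upper
  have h2 : a 2 = 0 := by linear_combination origin
  have h1 : a 1 = 0 := by
    have hmul : (3 * 2 ^ n : F) * a 1 = 0 := by
      linear_combination 2 * 2 ^ n * lower - upper + (1 - 2 * 2 ^ n) * h2
    simpa using hmul
  have h0 : a 0 = 0 := by linear_combination lower - 2 * h1 - h2
  ext i
  fin_cases i <;> assumption

theorem mdr_gridArrangement (hn : n ≠ 0) : mdr (gridArrangement F n) = n + 2 := by
  have hpoint : gridPoint F (.inr 2) = Pi.single 1 1 := by
    ext i
    fin_cases i <;> simp [gridPoint]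
  have hpencil : #(linesThrough (gridArrangement F n) (Pi.single 1 1)) = n + 1 := by
    rw [← hpoint, card_linesThrough_gridPoint_inr]
    rfl
  have hcard := card_gridArrangement (F := F) (n := n)
  have hoff := Finset.card_sdiff_add_card_eq_card
    (linesThrough_subset (gridArrangement F n) (Pi.single 1 1))
  rw [mdr_eq_card_sdiff_linesThrough isArrangement_gridArrangement (by omega)
    fun _ => eq_zero_of_dotProduct_intersectionPointsOff hn]
  omega

end GridArrangement

theorem exists_maxTjurina_odd_real_general (F : Type*) [Field F] [CharZero F] (r : ℕ)
    (hr : 3 ≤ r) :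
    ∃ A : Finset (MvPolynomial (Fin 3) F),
      IsArrangement A ∧ IsEssential A ∧ IsMaxTjurina A (2 * r - 1) r := by
  obtain ⟨n, rfl⟩ : ∃ n, r = n + 2 := ⟨r - 2, by omega⟩
  have hn : n ≠ 0 := by omega
  have htau : tauMax (2 * (n + 2) - 1) (n + 2) = 3 * n ^ 2 + 6 * n + 1 := by
    rw [tauMax, show 2 * (n + 2) - 1 - 1 = 2 * n + 2 by omega,
      show 2 * (n + 2) - 1 - (n + 2) - 1 = n by omega,
      show 2 * (n + 2) - (2 * (n + 2) - 1) + 2 = 3 by omega, show Nat.choose 3 2 = 3 from rfl]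
    exact Nat.sub_eq_of_eq_add (by ring)
  exact ⟨gridArrangement F n, isArrangement_gridArrangement, isEssential_gridArrangement hn,
    card_gridArrangement.trans (by omega), mdr_gridArrangement hn,
    (tjurina_gridArrangement hn).trans htau.symm⟩

/-- For every integer `r ≥ 4` (equivalently, every odd degree
`d = 2r − 1 ≥ 7`), there exists a line arrangement of `2r − 1` lines in the real
projective plane which is maximal Tjurina of type `(2r − 1, r)`. -/
theorem exists_maxTjurina_odd_real (r : ℕ) (hr : 4 ≤ r) :
    ∃ A : Finset (MvPolynomial (Fin 3) ℝ),
      IsArrangement A ∧ IsEssential A ∧ IsMaxTjurina A (2 * r - 1) r := by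
  exact exists_maxTjurina_odd_real_general ℝ r (by omega)
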